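/- In the Coxeter group W of type E8, for all integers i1, i2, j1, j2, j3, j4 with −1 ≤ i1 < i2 ≤ 1 and −1 ≤ j1 < j2 < j3 < j4 ≤ 4, the identity x'_{6,i1} · x'_{5,i2} · x_{4,2} · x'_{5,3} · x4 · x'_{6,j1} · x'_{5,j2} · x_{4,j3} · x'_{5,j4} · x6 = x4 · x'_{6,i1} · x'_{5,i2} · x_{4,2} · x'_{5,3} · x4 · x'_{6,j1} · x'_{5,j2} · x_{4,j3} · x'_{5,j4} holds. -/

import Mathlib

/-- The descending product `x i * x (i-1) * ... * x j` (equal to `1` when `j > i`). -/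
def descProd {G : Type*} [Group G] (x : ℤ → G) (i j : ℤ) : G :=
  ((List.range (i + 1 - j).toNat).map (fun n => x (i - (n : ℤ)))).prod

/-- The product `x i * x (i-2) * x (i-3) * ... * x j`, with the conventions
`primProd x i (i-1) = x i` and `primProd x i j = 1` for `j ≥ i`. -/
def primProd {G : Type*} [Group G] (x : ℤ → G) (i j : ℤ) : G :=
  if i ≤ j then 1 else x i * descProd x (i - 2) j

/-!
Write `d = x₄x₃(x₂x₅)x₃x₄`. Folding the commuting generators `x₂` and `x₅` together, the elements
`x₂x₅`, `x₃(x₂x₅)x₃` and `d` behave like the Jucys–Murphy elements of the Artin group of type B: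
each satisfies a braid relation of length four with the next of the generators `x₃`, `x₄`, `x₆`.
In particular `d x₆ d` commutes with `x₆`.

The prefix `x'_{6,i₁} x'_{5,i₂}` conjugates `x₆` to `x₄`, the next three factors multiply to `d`,
and `x'_{6,j₁} x'_{5,j₂} x_{4,j₃}` is `x₆ d` followed by generators commuting with `x₆`. Hence the
whole word conjugates `x₆` to `x₄`.
-/

section Braid

variable {S : Type*} [Semigroup S] {a b p s t : S}

theorem semiconjBy_mul_of_braid (hab : a * b * a = b * a * b) : SemiconjBy (a * b) a b := by
  simpa only [SemiconjBy, mul_assoc] using hab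

theorem commute_fold_of_braid (has : a * s * a = s * a * s) (hat : a * t * a = t * a * t)
    (hst : Commute s t) : Commute (a * (s * t) * a) (s * t) :=
  calc a * (s * t) * a * (s * t)
    _ = a * (s * t) * a * (t * s) := by rw [hst.eq]
    _ = a * s * (t * a * t) * s := by simp only [mul_assoc]
    _ = (a * s * a) * t * a * s := by simp only [← hat, mul_assoc]
    _ = s * a * (s * t) * a * s := by simp only [has, mul_assoc]
    _ = s * a * t * (s * a * s) := by simp only [hst.eq, mul_assoc]
    _ = s * (a * t * a) * s * a := by simp only [← has, mul_assoc]
    _ = s * t * a * (t * s) * a := by simp only [hat, mul_assoc]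
    _ = s * t * (a * (s * t) * a) := by simp only [← hst.eq, mul_assoc]

/-- The recursion for type B Jucys–Murphy elements: `Commute (a * p * a) p` is the braid relation of
length four between `a` and `p`, and it passes on to `b` and `a * p * a`. -/
theorem commute_murphy_step (hap : Commute (a * p * a) p) (hba : b * a * b = a * b * a)
    (hbp : Commute b p) : Commute (b * (a * p * a) * b) (a * p * a) :=
  calc b * (a * p * a) * b * (a * p * a)
    _ = b * a * p * (a * b * a) * p * a := by simp only [mul_assoc]
    _ = b * a * (p * b) * a * (b * p) * a := by simp only [← hba, mul_assoc]
    _ = (b * a * b) * p * a * p * b * a := by simp only [hbp.eq, mul_assoc]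
    _ = a * b * ((a * p * a) * p) * b * a := by simp only [hba, mul_assoc]
    _ = a * b * p * a * p * (a * b * a) := by rw [hap.eq]; simp only [mul_assoc]
    _ = a * (b * p) * a * (p * b) * a * b := by simp only [← hba, mul_assoc]
    _ = a * p * (b * a * b) * p * a * b := by simp only [hbp.eq, mul_assoc]
    _ = a * p * a * (b * (a * p * a) * b) := by simp only [hba, mul_assoc]

end Braid

section Words

variable {G : Type*} [Group G] (x : ℤ → G)

/-- In `descProd` the list `List.range _` is coerced to a `List ℤ`, before mapping, through the list
monad; here the coercion is moved into the mapped function. -/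
theorem descProd_eq_prod_map_range (i j : ℤ) :
    descProd x i j = ((List.range (i + 1 - j).toNat).map fun n : ℕ => x (i - n)).prod := by
  simp [descProd, ← List.map_eq_flatMap, Function.comp_def]

theorem descProd_of_lt {i j : ℤ} (h : i < j) : descProd x i j = 1 := by
  have hlen : (i + 1 - j).toNat = 0 := by lia
  simp [descProd, hlen]

theorem descProd_of_le {i j : ℤ} (h : j ≤ i) :
    descProd x i j = x i * descProd x (i - 1) j := by
  have hlen : (i + 1 - j).toNat = (i - 1 + 1 - j).toNat + 1 := by lia
  simp only [descProd_eq_prod_map_range, hlen, List.range_succ_eq_map]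
  simp [Function.comp_def, sub_sub, add_comm]

theorem primProd_of_lt {i j : ℤ} (h : j < i) :
    primProd x i j = x i * descProd x (i - 2) j :=
  if_neg h.not_ge

variable {x}

theorem commute_descProd {a : G} {i j : ℤ} (h : ∀ k, j ≤ k → k ≤ i → Commute a (x k)) :
    Commute a (descProd x i j) := by
  rw [descProd_eq_prod_map_range]
  refine Commute.list_prod_right _ _ fun y hy => ?_
  obtain ⟨n, hn, rfl⟩ := List.mem_map.mp hy
  rw [List.mem_range] at hn
  exact h _ (by lia) (by lia)

end Words

section TypeE

variable {G : Type*} [Group G] {x : ℤ → G} {m : ℤ}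

/-- The word `x₄x₃(x₂x₅)x₃x₄`, the third of the Jucys–Murphy-like elements obtained from `x₂x₅` by
multiplying on both sides with `x₃` and then with `x₄`. -/
def murphyWord (x : ℤ → G) : G :=
  x 4 * (x 3 * (x 2 * x 5) * x 3) * x 4

theorem commute_murphyWord_mul_mul (h32 : x 3 * x 2 * x 3 = x 2 * x 3 * x 2)
    (h43 : x 4 * x 3 * x 4 = x 3 * x 4 * x 3) (h53 : x 5 * x 3 * x 5 = x 3 * x 5 * x 3)
    (h64 : x 6 * x 4 * x 6 = x 4 * x 6 * x 4) (h52 : Commute (x 5) (x 2))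
    (h42 : Commute (x 4) (x 2)) (h54 : Commute (x 5) (x 4)) (h62 : Commute (x 6) (x 2))
    (h63 : Commute (x 6) (x 3)) (h65 : Commute (x 6) (x 5)) :
    Commute (murphyWord x * x 6 * murphyWord x) (x 6) := by
  have rel3 : Commute (x 3 * (x 2 * x 5) * x 3) (x 2 * x 5) :=
    commute_fold_of_braid h32 h53.symm h52.symm
  have rel4 : Commute (x 4 * (x 3 * (x 2 * x 5) * x 3) * x 4) (x 3 * (x 2 * x 5) * x 3) :=
    commute_murphy_step rel3 h43 (h42.mul_right h54.symm)
  have rel6 : Commute (x 6 * murphyWord x * x 6) (murphyWord x) :=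
    commute_murphy_step rel4 h64 ((h63.mul_right (h62.mul_right h65)).mul_right h63)
  simpa only [Commute, SemiconjBy, mul_assoc] using rel6.eq.symm

theorem descProd_mul_primProd_mul_eq_murphyWord (x : ℤ → G) :
    descProd x 4 2 * primProd x 5 3 * x 4 = murphyWord x := by
  simp [descProd_of_le, descProd_of_lt, primProd_of_lt, murphyWord, mul_assoc]

theorem primProd_mul_primProd_mul_descProd_eq_murphyWord
    (hcomm3 : ∀ k, m ≤ k → k ≤ 1 → Commute (x 3) (x k))
    (hcomm4 : ∀ k, m ≤ k → k ≤ 2 → Commute (x 4) (x k))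
    (hcomm5 : ∀ k, m ≤ k → k ≤ 1 → Commute (x 5) (x k)) {j₁ j₂ j₃ : ℤ}
    (hm₁ : m ≤ j₁) (hj₁ : j₁ ≤ 2) (hm₂ : m ≤ j₂) (hj₂ : j₂ ≤ 3) (hj₃ : j₃ ≤ 4) :
    primProd x 6 j₁ * primProd x 5 j₂ * descProd x 4 j₃ =
      x 6 * murphyWord x * (descProd x 1 j₁ * descProd x 2 j₂ * descProd x 3 j₃) := by
  have hj₁_past : Commute (x 5 * x 3 * x 4) (descProd x 1 j₁) :=
    ((commute_descProd fun k _ _ => hcomm5 k (by lia) (by lia)).mul_left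
      (commute_descProd fun k _ _ => hcomm3 k (by lia) (by lia))).mul_left
      (commute_descProd fun k _ _ => hcomm4 k (by lia) (by lia))
  have hj₂_past : Commute (x 4) (descProd x 2 j₂) :=
    commute_descProd fun k _ _ => hcomm4 k (by lia) (by lia)
  have h₁ : primProd x 6 j₁ = x 6 * x 4 * x 3 * x 2 * descProd x 1 j₁ := by
    rw [primProd_of_lt x (by lia), descProd_of_le x (by lia), descProd_of_le x (by lia),
      descProd_of_le x (by lia)]
    norm_num [mul_assoc]
  have h₂ : primProd x 5 j₂ = x 5 * x 3 * descProd x 2 j₂ := by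
    rw [primProd_of_lt x (by lia), descProd_of_le x (by lia)]
    norm_num [mul_assoc]
  have h₃ : descProd x 4 j₃ = x 4 * descProd x 3 j₃ := descProd_of_le x hj₃
  calc primProd x 6 j₁ * primProd x 5 j₂ * descProd x 4 j₃
    _ = x 6 * x 4 * x 3 * x 2 * descProd x 1 j₁ * (x 5 * x 3) *
          (descProd x 2 j₂ * x 4) * descProd x 3 j₃ := by simp only [h₁, h₂, h₃, mul_assoc]
    _ = x 6 * x 4 * x 3 * x 2 * (descProd x 1 j₁ * (x 5 * x 3 * x 4)) *
          descProd x 2 j₂ * descProd x 3 j₃ := by simp only [← hj₂_past.eq, mul_assoc]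
    _ = x 6 * murphyWord x * (descProd x 1 j₁ * descProd x 2 j₂ * descProd x 3 j₃) := by
      rw [← hj₁_past.eq]
      simp only [murphyWord, mul_assoc]

theorem commute_primProd_five (hcomm6 : ∀ k, m ≤ k → k ≤ 5 → k ≠ 4 → Commute (x 6) (x k))
    {j : ℤ} (hmj : m ≤ j) (hj : j ≤ 5) : Commute (x 6) (primProd x 5 j) := by
  rcases hj.lt_or_eq with hlt | rfl
  · rw [primProd_of_lt x hlt]
    exact (hcomm6 5 (by lia) le_rfl (by lia)).mul_right
      (commute_descProd fun k _ _ => hcomm6 k (by lia) (by lia) (by lia))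
  · simp [primProd]

theorem semiconjBy_primProd_six (h64 : x 6 * x 4 * x 6 = x 4 * x 6 * x 4)
    (hcomm6 : ∀ k, m ≤ k → k ≤ 3 → Commute (x 6) (x k)) {j : ℤ} (hmj : m ≤ j) (hj : j ≤ 4) :
    SemiconjBy (primProd x 6 j) (x 6) (x 4) := by
  have htail : Commute (x 6) (descProd x 3 j) :=
    commute_descProd fun k _ _ => hcomm6 k (by lia) (by lia)
  have hsplit : primProd x 6 j = x 6 * x 4 * descProd x 3 j := by
    rw [primProd_of_lt x (by lia), descProd_of_le x (by lia)]
    norm_num [mul_assoc]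
  rw [hsplit]
  exact (semiconjBy_mul_of_braid h64).mul_left htail.symm

end TypeE

theorem E8_f1_general {G : Type*} [Group G] {x : ℤ → G} {m : ℤ}
    (h32 : x 3 * x 2 * x 3 = x 2 * x 3 * x 2) (h43 : x 4 * x 3 * x 4 = x 3 * x 4 * x 3)
    (h53 : x 5 * x 3 * x 5 = x 3 * x 5 * x 3) (h64 : x 6 * x 4 * x 6 = x 4 * x 6 * x 4)
    (hcomm3 : ∀ k, m ≤ k → k ≤ 1 → Commute (x 3) (x k))
    (hcomm4 : ∀ k, m ≤ k → k ≤ 2 → Commute (x 4) (x k))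
    (hcomm5 : ∀ k, m ≤ k → k ≤ 4 → k ≠ 3 → Commute (x 5) (x k))
    (hcomm6 : ∀ k, m ≤ k → k ≤ 5 → k ≠ 4 → Commute (x 6) (x k))
    {i₁ i₂ j₁ j₂ j₃ j₄ : ℤ} (hmi : m ≤ i₁) (hi₁₂ : i₁ < i₂) (hi₂ : i₂ ≤ 5)
    (hmj : m ≤ j₁) (hj₁₂ : j₁ < j₂) (hj₂₃ : j₂ < j₃) (hj₃₄ : j₃ < j₄) (hj₄ : j₄ ≤ 5) :
    SemiconjBy (primProd x 6 i₁ * primProd x 5 i₂ * descProd x 4 2 * primProd x 5 3 * x 4 *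
      primProd x 6 j₁ * primProd x 5 j₂ * descProd x 4 j₃ * primProd x 5 j₄) (x 6) (x 4) := by
  have hprefix : SemiconjBy (primProd x 6 i₁ * primProd x 5 i₂) (x 6) (x 4) :=
    (semiconjBy_primProd_six h64 (fun k hk hk3 => hcomm6 k hk (by lia) (by lia)) hmi
      (by lia)).mul_left (commute_primProd_five hcomm6 (by lia) hi₂).symm
  have hcore : Commute (murphyWord x * x 6 * murphyWord x) (x 6) := by
    apply commute_murphyWord_mul_mul h32 h43 h53 h64 <;>
      first | apply hcomm4 | apply hcomm5 | apply hcomm6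
    all_goals lia
  have hdesc : ∀ i j, m ≤ j → i ≤ 3 → Commute (x 6) (descProd x i j) := fun i j hj hi =>
    commute_descProd fun k _ _ => hcomm6 k (by lia) (by lia) (by lia)
  have hsuffix : Commute (x 6) (descProd x 1 j₁ * descProd x 2 j₂ * descProd x 3 j₃ *
      primProd x 5 j₄) :=
    (((hdesc 1 j₁ hmj (by lia)).mul_right (hdesc 2 j₂ (by lia) (by lia))).mul_right
      (hdesc 3 j₃ (by lia) le_rfl)).mul_right (commute_primProd_five hcomm6 (by lia) hj₄)
  have hfactor := primProd_mul_primProd_mul_descProd_eq_murphyWord (j₃ := j₃) hcomm3 hcomm4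
    (fun k hk hk1 => hcomm5 k hk (by lia) (by lia)) hmj (by lia) (by lia : m ≤ j₂) (by lia)
    (by lia)
  have hword : primProd x 6 i₁ * primProd x 5 i₂ * descProd x 4 2 * primProd x 5 3 * x 4 *
      primProd x 6 j₁ * primProd x 5 j₂ * descProd x 4 j₃ * primProd x 5 j₄ =
      primProd x 6 i₁ * primProd x 5 i₂ * (descProd x 4 2 * primProd x 5 3 * x 4) *
        (primProd x 6 j₁ * primProd x 5 j₂ * descProd x 4 j₃) * primProd x 5 j₄ := by
    simp only [mul_assoc]
  rw [hword, descProd_mul_primProd_mul_eq_murphyWord, hfactor]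
  simpa only [mul_assoc] using (hprefix.mul_left hcore).mul_left hsuffix.symm

theorem E8_f1 (G : Type*) [Group G] (x : ℤ → G)
    (hsq : ∀ i : ℤ, (-1) ≤ i → i ≤ 6 → x i ^ 2 = 1)
    (hbraid : ∀ i : ℤ, (-1) ≤ i → i ≤ 3 → x (i+1) * x i * x (i+1) = x i * x (i+1) * x i)
    (h53 : x 5 * x 3 * x 5 = x 3 * x 5 * x 3)
    (h64 : x 6 * x 4 * x 6 = x 4 * x 6 * x 4)
    (hcomm : ∀ i j : ℤ, (-1) ≤ j → j + 1 < i → i ≤ 4 → x i * x j = x j * x i)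
    (hcomm5 : ∀ i : ℤ, (-1) ≤ i → i ≤ 6 → i ≠ 3 → i ≠ 5 → x 5 * x i = x i * x 5)
    (hcomm6 : ∀ i : ℤ, (-1) ≤ i → i ≤ 6 → i ≠ 4 → i ≠ 6 → x 6 * x i = x i * x 6) :
    ∀ i1 i2 j1 j2 j3 j4 : ℤ, -1 ≤ i1 → i1 < i2 → i2 ≤ 1 →
      -1 ≤ j1 → j1 < j2 → j2 < j3 → j3 < j4 → j4 ≤ 4 →
      primProd x 6 i1 * primProd x 5 i2 * descProd x 4 2 * primProd x 5 3 * x 4 * primProd x 6 j1 *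
        primProd x 5 j2 * descProd x 4 j3 * primProd x 5 j4 * x 6 =
      x 4 * primProd x 6 i1 * primProd x 5 i2 * descProd x 4 2 * primProd x 5 3 * x 4 *
        primProd x 6 j1 * primProd x 5 j2 * descProd x 4 j3 * primProd x 5 j4 := by
  intro i1 i2 j1 j2 j3 j4 hi1 hi12 hi2 hj1 hj12 hj23 hj34 hj4
  have key := E8_f1_general (hbraid 2 (by lia) (by lia)) (hbraid 3 (by lia) (by lia)) h53 h64
    (fun k hk _ => hcomm 3 k hk (by lia) (by lia)) (fun k hk _ => hcomm 4 k hk (by lia) le_rfl)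
    (fun k hk _ hk3 => hcomm5 k hk (by lia) hk3 (by lia))
    (fun k hk _ hk4 => hcomm6 k hk (by lia) hk4 (by lia))
    hi1 hi12 (by lia) hj1 hj12 hj23 hj34 (by lia)
  simpa only [mul_assoc] using key.eq
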